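/- The covariant derivatives of the orthonormal frame fields satisfy, at every p ∈ ℝⁿ and for all i, j ∈ {3, …, n}: ∇_T T = −∇_Z Z = Σ_{i=3}^n (H_i/2)·X_i, ∇_T Z = ∇_Z T = 0, ∇_{X_i} X_j = 0, ∇_T X_i = −∇_{X_i} Z = −(H_i/2)·T, and ∇_Z X_i = −∇_{X_i} T = (H_i/2)·Z. -/

import Mathlib

/-!
Both `T` and `Z` belong to the family `W_c = ((H + c)/2) e₀ - e₁` (with `c = 1` and `c = -1`), and
`D W_c (w) = (dH(w)/2) e₀`. Since `H` does not depend on `v`, `dH(W_c) = -H_u`, which makes the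
`u`-derivative cancel against the Christoffel symbol `Γ^v_{uu} = H_u/2`. This gives the closed forms

* `∇_{W_c} W_d = ((c + d)/4) Σᵢ Hᵢ Xᵢ` (`cd_WW_WW`),
* `∇_{W_c} Xᵢ = -(c Hᵢ/2) W_c` for `c = ±1` (`cd_WW_XX`, in components and for every `c`),
* `∇_{Xᵢ} W_c = (Hᵢ/2) e₀ + ∇_{W_c} Xᵢ`, by the symmetry of `Γ` (`cd_XX_WW`).

Every assertion of the theorem is an instance of one of them or of `∇_{Xᵢ} Xⱼ = 0`.
-/

noncomputable section

/-- Points of ℝⁿ (dimension `n+3`, so that the dimension is at least 3):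
coordinate `0` is `v`, coordinate `1` is `u`, coordinates `2,…,n+2` are the `xⁱ`. -/
abbrev V (n : ℕ) : Type := Fin (n+3) → ℝ

/-- The standard basis vectors. -/
def ee {n : ℕ} (i : Fin (n+3)) : V n := Pi.single i 1

/-- The standard Riemannian dual metric `g`. -/
def gg {n : ℕ} (H : V n → ℝ) (p : V n) (a b : V n) : ℝ :=
  2 * a 0 * b 0 + H p * (a 0 * b 1 + a 1 * b 0) + (1 + H p ^ 2) / 2 * (a 1 * b 1)
    + ∑ i : Fin (n+3), if 2 ≤ (i : ℕ) then a i * b i else 0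

/-- The vector field `T`. -/
def TT {n : ℕ} (H : V n → ℝ) (p : V n) : V n := ((H p + 1) / 2) • ee 0 - ee 1

/-- The vector field `Z`. -/
def ZZ {n : ℕ} (H : V n → ℝ) (p : V n) : V n := ((H p - 1) / 2) • ee 0 - ee 1

/-- The (constant) coordinate vector fields `X_i`. -/
def XX {n : ℕ} (i : Fin (n+3)) : V n → V n := fun _ => ee i

/-- Partial derivative of `H` in the `i`-th coordinate direction. -/
def Hd {n : ℕ} (H : V n → ℝ) (i : Fin (n+3)) (p : V n) : ℝ := fderiv ℝ H p (ee i)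

/-- `H` is independent of the first coordinate `v`. -/
def VIndep {n : ℕ} (H : V n → ℝ) : Prop :=
  ∀ (p : V n) (c : ℝ), H (Function.update p 0 c) = H p

/-- The Lie bracket of vector fields on ℝⁿ. -/
def br {n : ℕ} (a b : V n → V n) (p : V n) : V n :=
  fderiv ℝ b p (a p) - fderiv ℝ a p (b p)

/-- The Christoffel symbols of `g`, as a symmetric bilinear map `Γ_p : ℝⁿ × ℝⁿ → ℝⁿ`.
Its only nonzero components (indices `v = 0`, `u = 1`, `i = 2, …, n+2`) are
`Γ^u_{vi} = H_i`, `Γ^i_{vu} = −H_i/2`, `Γ^v_{vi} = −(1/2)H·H_i`, `Γ^i_{uu} = −(1/2)H·H_i`,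
`Γ^u_{ui} = (1/2)H·H_i`, `Γ^v_{uu} = (1/2)H_u`, `Γ^v_{ui} = −(1/4)(H²−1)H_i`,
together with their symmetric counterparts. -/
def Ga {n : ℕ} (H : V n → ℝ) (p : V n) (a b : V n) : V n := fun j =>
  if (j : ℕ) = 0 then
    (∑ i : Fin (n+3),
        if 2 ≤ (i : ℕ) then (-(1/2) * H p * Hd H i p) * (a 0 * b i + a i * b 0) else 0)
      + ((1/2) * Hd H 1 p) * (a 1 * b 1)
      + (∑ i : Fin (n+3),
          if 2 ≤ (i : ℕ) then (-(1/4) * ((H p)^2 - 1) * Hd H i p) * (a 1 * b i + a i * b 1)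
          else 0)
  else if (j : ℕ) = 1 then
    (∑ i : Fin (n+3), if 2 ≤ (i : ℕ) then (Hd H i p) * (a 0 * b i + a i * b 0) else 0)
      + (∑ i : Fin (n+3),
          if 2 ≤ (i : ℕ) then ((1/2) * H p * Hd H i p) * (a 1 * b i + a i * b 1) else 0)
  else
    (-(1/2) * Hd H j p) * (a 0 * b 1 + a 1 * b 0) + (-(1/2) * H p * Hd H j p) * (a 1 * b 1)

/-- The connection `(∇_a b)(p) = (Db)_p(a(p)) + Γ_p(a(p), b(p))`. -/
def cd {n : ℕ} (H : V n → ℝ) (a b : V n → V n) (p : V n) : V n :=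
  fderiv ℝ b p (a p) + Ga H p (a p) (b p)

/-- The curvature `R(a,b)c = ∇_a ∇_b c − ∇_b ∇_a c − ∇_{[a,b]} c`. -/
def Rcurv {n : ℕ} (H : V n → ℝ) (a b c : V n → V n) (p : V n) : V n :=
  cd H a (cd H b c) p - cd H b (cd H a c) p - cd H (br a b) c p

/-- The family of fields `W_c = ((H + c)/2) e₀ - e₁`, containing `T = W_1` and `Z = W_{-1}`. -/
def WW {n : ℕ} (c : ℝ) (H : V n → ℝ) (p : V n) : V n := ((H p + c) / 2) • ee 0 - ee 1

lemma TT_eq_WW {n : ℕ} (H : V n → ℝ) : TT H = WW 1 H := rfl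

lemma ZZ_eq_WW {n : ℕ} (H : V n → ℝ) : ZZ H = WW (-1) H := by
  funext p; simp [ZZ, WW, sub_eq_add_neg]

lemma ee_apply {n : ℕ} (i j : Fin (n+3)) : (ee i : V n) j = if j = i then 1 else 0 := by
  simp [ee, Pi.single_apply]

lemma ne_zero_of_two_le {n : ℕ} {i : Fin (n+3)} (hi : 2 ≤ (i : ℕ)) : i ≠ 0 := by
  rintro rfl; simp at hi

lemma ne_one_of_two_le {n : ℕ} {i : Fin (n+3)} (hi : 2 ≤ (i : ℕ)) : i ≠ 1 := by
  rintro rfl; simp at hi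

/-- Every index is that of `v`, that of `u`, or one of the transverse indices. -/
lemma index_cases {n : ℕ} (j : Fin (n+3)) : j = 0 ∨ j = 1 ∨ 2 ≤ (j : ℕ) := by
  by_cases h0 : (j : ℕ) = 0
  · exact Or.inl (Fin.ext h0)
  by_cases h1 : (j : ℕ) = 1
  · exact Or.inr (Or.inl (Fin.ext (by simpa using h1)))
  · right; right; omega

lemma WW_zero {n : ℕ} (c : ℝ) (H : V n → ℝ) (p : V n) : WW c H p 0 = (H p + c) / 2 := by
  simp [WW, ee_apply]

lemma WW_one {n : ℕ} (c : ℝ) (H : V n → ℝ) (p : V n) : WW c H p 1 = -1 := by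
  simp [WW, ee_apply]

lemma WW_transverse {n : ℕ} (c : ℝ) (H : V n → ℝ) (p : V n) {i : Fin (n+3)}
    (hi : 2 ≤ (i : ℕ)) : WW c H p i = 0 := by
  simp [WW, ee_apply, ne_zero_of_two_le hi, ne_one_of_two_le hi]

lemma Hd_zero {n : ℕ} {H : V n → ℝ} (hH : Differentiable ℝ H) (hHv : VIndep H) (p : V n) :
    Hd H 0 p = 0 := by
  have h1 : HasDerivAt (fun t : ℝ => H (p + t • ee 0)) (Hd H 0 p) 0 := by
    have h := (hH p).hasFDerivAt.hasLineDerivAt (ee 0)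
    exact h
  -- Moving along `e₀` only changes the coordinate `v`, so `H` is constant on that line.
  have h2 : (fun t : ℝ => H (p + t • ee 0)) = fun _ => H p := by
    funext t
    rw [← hHv p (p 0 + t)]
    congr 1
    funext j
    by_cases hj : j = 0
    · subst hj; simp [ee_apply]
    · simp [ee_apply, hj]
  rw [h2] at h1
  exact h1.unique (hasDerivAt_const 0 (H p))

lemma fderiv_H_WW {n : ℕ} {H : V n → ℝ} (hH : Differentiable ℝ H) (hHv : VIndep H) (c : ℝ)
    (p : V n) : fderiv ℝ H p (WW c H p) = -Hd H 1 p := by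
  have h := Hd_zero hH hHv p
  unfold Hd at *
  simp [WW, h]

lemma fderiv_WW {n : ℕ} {H : V n → ℝ} (hH : Differentiable ℝ H) (c : ℝ) (p w : V n) :
    fderiv ℝ (WW c H) p w = (fderiv ℝ H p w / 2) • ee 0 := by
  have h : HasFDerivAt (WW c H) (((2 : ℝ)⁻¹ • fderiv ℝ H p).smulRight (ee 0 : V n)) p := by
    have h1 := (((hH p).hasFDerivAt.add_const c).const_mul (2 : ℝ)⁻¹).smul_const (ee 0 : V n)
    have h2 := h1.sub_const (ee 1 : V n)
    refine h2.congr_of_eventuallyEq (Filter.Eventually.of_forall fun q => ?_)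
    simp [WW, div_eq_inv_mul]
  rw [h.fderiv]
  simp [div_eq_inv_mul]

lemma fderiv_XX {n : ℕ} (i : Fin (n+3)) (p w : V n) : fderiv ℝ (XX i) p w = 0 := by
  unfold XX; simp

lemma Ga_symm {n : ℕ} (H : V n → ℝ) (p a b : V n) : Ga H p a b = Ga H p b a := by
  have h : ∀ x y : Fin (n+3), a x * b y + a y * b x = b x * a y + b y * a x :=
    fun x y => by ring
  funext j
  simp only [Ga, h, mul_comm (a 1) (b 1)]

/-- A sum over the transverse indices with a Kronecker delta collapses to one term. -/
lemma sum_transverse_single {n : ℕ} (f : Fin (n+3) → ℝ) {i : Fin (n+3)} (hi : 2 ≤ (i : ℕ)) :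
    (∑ k : Fin (n+3), if 2 ≤ (k : ℕ) then f k * (if k = i then 1 else 0) else 0) = f i := by
  rw [Finset.sum_eq_single i]
  · simp [hi]
  · intro k _ hk; simp [hk]
  · simp

/-- The coordinates of `Σᵢ (Hᵢ/2) Xᵢ`. -/
lemma gradient_apply {n : ℕ} (H : V n → ℝ) (p : V n) (j : Fin (n+3)) :
    (∑ i : Fin (n+3), if 2 ≤ (i : ℕ) then (Hd H i p / 2) • ee i else (0 : V n)) j
      = if 2 ≤ (j : ℕ) then Hd H j p / 2 else 0 := by
  rw [Finset.sum_apply, Finset.sum_eq_single j]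
  · split_ifs <;> simp [ee_apply]
  · intro k _ hk
    split_ifs <;> simp [ee_apply, hk.symm]
  · simp

/-- `Γ(a, b)` when neither `a` nor `b` has transverse components. -/
lemma Ga_of_transverse_zero {n : ℕ} (H : V n → ℝ) (p a b : V n)
    (ha : ∀ i : Fin (n+3), 2 ≤ (i : ℕ) → a i = 0) (hb : ∀ i : Fin (n+3), 2 ≤ (i : ℕ) → b i = 0)
    (j : Fin (n+3)) :
    Ga H p a b j = if (j : ℕ) = 0 then ((1/2) * Hd H 1 p) * (a 1 * b 1)
      else if (j : ℕ) = 1 then 0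
      else (-(1/2) * Hd H j p) * (a 0 * b 1 + a 1 * b 0)
        + (-(1/2) * H p * Hd H j p) * (a 1 * b 1) := by
  have hs : ∀ (f : Fin (n+3) → ℝ) (x : Fin (n+3)),
      (∑ i : Fin (n+3), if 2 ≤ (i : ℕ) then f i * (a x * b i + a i * b x) else 0) = 0 := by
    intro f x
    refine Finset.sum_eq_zero fun i _ => ?_
    split_ifs with hi
    · simp [ha i hi, hb i hi]
    · rfl
  simp only [Ga, hs, add_zero, zero_add]

/-- `Γ(a, Xᵢ)`; it involves only the `v`- and `u`-components of `a`. -/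
lemma Ga_ee {n : ℕ} (H : V n → ℝ) (p a : V n) {i : Fin (n+3)} (hi : 2 ≤ (i : ℕ))
    (j : Fin (n+3)) :
    Ga H p a (ee i) j
      = if (j : ℕ) = 0 then
          -(1/2) * H p * Hd H i p * a 0 + -(1/4) * ((H p)^2 - 1) * Hd H i p * a 1
        else if (j : ℕ) = 1 then Hd H i p * a 0 + (1/2) * H p * Hd H i p * a 1
        else 0 := by
  have e0 : (ee i : V n) 0 = 0 := by simp [ee_apply, (ne_zero_of_two_le hi).symm]
  have e1 : (ee i : V n) 1 = 0 := by simp [ee_apply, (ne_one_of_two_le hi).symm]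
  have hs := fun (f : Fin (n+3) → ℝ) => sum_transverse_single f hi
  simp only [Ga, e0, e1, mul_zero, add_zero, ee_apply, ← mul_assoc, hs]

lemma cd_WW_WW {n : ℕ} {H : V n → ℝ} (hH : Differentiable ℝ H) (hHv : VIndep H) (c d : ℝ)
    (p : V n) (j : Fin (n+3)) :
    cd H (WW c H) (WW d H) p j = if 2 ≤ (j : ℕ) then (c + d) / 4 * Hd H j p else 0 := by
  rw [cd, Pi.add_apply, fderiv_WW hH, fderiv_H_WW hH hHv,
    Ga_of_transverse_zero H p _ _ (fun _ => WW_transverse c H p) (fun _ => WW_transverse d H p)]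
  simp only [WW_zero, WW_one, Pi.smul_apply, smul_eq_mul, ee_apply]
  rcases index_cases j with rfl | rfl | hj
  · simp; ring
  · simp
  · rw [if_neg (ne_zero_of_two_le hj), if_neg (by omega), if_neg (by omega), if_pos hj]
    ring

lemma cd_WW_XX {n : ℕ} (H : V n → ℝ) (c : ℝ) (p : V n) {i : Fin (n+3)} (hi : 2 ≤ (i : ℕ))
    (j : Fin (n+3)) :
    cd H (WW c H) (XX i) p j
      = if (j : ℕ) = 0 then -(Hd H i p / 4) * (c * H p + 1)
        else if (j : ℕ) = 1 then c * Hd H i p / 2 else 0 := by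
  rw [cd, Pi.add_apply, fderiv_XX, XX, Ga_ee H p _ hi, WW_zero, WW_one, Pi.zero_apply]
  split_ifs <;> ring

lemma cd_XX_WW {n : ℕ} {H : V n → ℝ} (hH : Differentiable ℝ H) (c : ℝ) (p : V n)
    (i : Fin (n+3)) :
    cd H (XX i) (WW c H) p = (Hd H i p / 2) • ee 0 + cd H (WW c H) (XX i) p := by
  rw [cd, cd, fderiv_WW hH, fderiv_XX, Ga_symm, zero_add]
  rfl

lemma cd_XX_XX {n : ℕ} (H : V n → ℝ) (p : V n) {i j : Fin (n+3)} (hi : 2 ≤ (i : ℕ))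
    (hj : 2 ≤ (j : ℕ)) : cd H (XX i) (XX j) p = 0 := by
  funext k
  rw [cd, Pi.add_apply, fderiv_XX, XX, XX, Ga_ee H p _ hj]
  simp [ee_apply, (ne_zero_of_two_le hi).symm, (ne_one_of_two_le hi).symm]

/-- The covariant derivatives of the orthonormal frame fields:
`∇_T T = −∇_Z Z = Σᵢ (Hᵢ/2)·Xᵢ`, `∇_T Z = ∇_Z T = 0`, `∇_{Xᵢ} Xⱼ = 0`,
`∇_T Xᵢ = −∇_{Xᵢ} Z = −(Hᵢ/2)·T`, and `∇_Z Xᵢ = −∇_{Xᵢ} T = (Hᵢ/2)·Z`. -/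
theorem stmt_13 (n : ℕ) (H : V n → ℝ) (hH : ContDiff ℝ (⊤ : ℕ∞) H) (hHv : VIndep H) :
    ∀ p : V n,
      cd H (TT H) (TT H) p
        = (∑ i : Fin (n+3), if 2 ≤ (i : ℕ) then (Hd H i p / 2) • ee i else (0 : V n)) ∧
      cd H (ZZ H) (ZZ H) p
        = -(∑ i : Fin (n+3), if 2 ≤ (i : ℕ) then (Hd H i p / 2) • ee i else (0 : V n)) ∧
      cd H (TT H) (ZZ H) p = 0 ∧
      cd H (ZZ H) (TT H) p = 0 ∧
      (∀ i j : Fin (n+3), 2 ≤ (i : ℕ) → 2 ≤ (j : ℕ) → cd H (XX i) (XX j) p = 0) ∧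
      (∀ i : Fin (n+3), 2 ≤ (i : ℕ) →
        cd H (TT H) (XX i) p = -(Hd H i p / 2) • TT H p ∧
        cd H (XX i) (ZZ H) p = (Hd H i p / 2) • TT H p ∧
        cd H (ZZ H) (XX i) p = (Hd H i p / 2) • ZZ H p ∧
        cd H (XX i) (TT H) p = -(Hd H i p / 2) • ZZ H p) := by
  intro p
  have hd : Differentiable ℝ H := hH.differentiable (by simp)
  rw [TT_eq_WW, ZZ_eq_WW]
  refine ⟨?_, ?_, ?_, ?_, fun i j hi hj => cd_XX_XX H p hi hj, fun i hi => ⟨?_, ?_, ?_, ?_⟩⟩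
  · funext j
    rw [cd_WW_WW hd hHv, gradient_apply]
    split_ifs <;> ring
  · funext j
    rw [cd_WW_WW hd hHv, Pi.neg_apply, gradient_apply]
    split_ifs <;> ring
  · funext j
    rw [cd_WW_WW hd hHv]
    simp
  · funext j
    rw [cd_WW_WW hd hHv]
    simp
  all_goals
    funext j
    simp only [cd_XX_WW hd, Pi.add_apply, cd_WW_XX H _ p hi, Pi.smul_apply, smul_eq_mul, ee_apply]
    rcases index_cases j with rfl | rfl | hj
    · simp [WW_zero]; try ring
    · simp [WW_one]; try ring
    · have h0 : (j : ℕ) ≠ 0 := by omega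
      have h1 : (j : ℕ) ≠ 1 := by omega
      simp [WW_transverse _ H p hj, h0, h1, ne_zero_of_two_le hj]
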